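/- Let {b_k} be a sequence of integers with |b_k| ≥ 2, N ≥ 2 a prime, and {t_k} a sequence of nonzero integers. Define s_k = τ_N(b_1 b_2 ⋯ b_k) − τ_N(N t_k), where τ_N(A) = max{j ∈ ℕ : N^j | A}, and let D_k = {0,1,...,N−1} t_k. Then for every k ≥ 1, the set D_k ⊕ b_k D_{k−1} ⊕ b_k b_{k−1} D_{k−2} ⊕ ⋯ ⊕ b_k b_{k−1}⋯b_2 D_1 is a direct sum and an integer tile (i.e., tiles ℤ by translations) if and only if s_i ≠ s_j for all i ≠ j in ℕ⁺. -/

import Mathlib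

/-! Write `c j = N ^ v j * u j` with `u j` coprime to `N`. In a tiling of `ℤ` by digit expansions
with weights `c`, the `i`-th digit of an integer `z`, read modulo `N`, increases by exactly `1`
when `z` moves to `z + c i`. Hence the tiling survives multiplication of any weight by an
integer coprime to `N`. If `v i = v j`, multiplying each weight by the product of the units of the
others makes the weights `i` and `j` equal, which is absurd. If `v` is injective, the weights
`N ^ v j` form part of a positional system and so tile, and multiplying them by the `u j`
gives a tiling with weights `c`. -/

lemma sum_eq_sum_add_sub_of_eq_of_ne {ι G : Type*} [Fintype ι] [AddCommGroup G] {g g' : ι → G}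
    (i : ι) (h : ∀ j, j ≠ i → g j = g' j) : ∑ j, g j = ∑ j, g' j + (g i - g' i) := by
  rw [← sub_eq_iff_eq_add', ← Finset.sum_sub_distrib]
  exact Fintype.sum_eq_single i fun j hj => sub_eq_zero.2 (h j hj)

lemma injective_natCast_zmod_finVal (N : ℕ) :
    Function.Injective fun k : Fin N => ((k : ℕ) : ZMod N) := fun k k' hk =>
  Fin.ext (((ZMod.natCast_eq_natCast_iff _ _ _).1 hk).eq_of_lt_of_lt k.isLt k'.isLt)

section DigitSum

variable {ι : Type*} [Fintype ι] {N : ℕ}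

/-- The integer with digits `l j ∈ {0, …, N - 1}` for the weights `c j`. Its values form the sum
of the digit sets `{0, c j, …, (N - 1) c j}`, and it is injective when that sum is direct. -/
def digitSum (c : ι → ℤ) (l : ι → Fin N) : ℤ :=
  ∑ j, c j * ((l j : ℕ) : ℤ)

lemma digitSum_update [DecidableEq ι] (c : ι → ℤ) (l : ι → Fin N) (i : ι) (k : Fin N) :
    digitSum c (Function.update l i k) = digitSum c l + c i * ((k : ℤ) - (l i : ℤ)) := by
  rw [digitSum, sum_eq_sum_add_sub_of_eq_of_ne i fun j hj => by rw [Function.update_of_ne hj],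
    Function.update_self, ← mul_sub, digitSum]

lemma digitSum_update_succ [DecidableEq ι] (c : ι → ℤ) {l : ι → Fin N} {i : ι}
    (hl : (l i : ℕ) + 1 < N) :
    digitSum c (Function.update l i ⟨l i + 1, hl⟩) = digitSum c l + c i := by
  rw [digitSum_update]
  push_cast
  ring

lemma digitSum_update_pred [DecidableEq ι] (c : ι → ℤ) {l : ι → Fin N} {i : ι}
    (hl : 1 ≤ (l i : ℕ)) :
    digitSum c (Function.update l i ⟨l i - 1, by omega⟩) = digitSum c l - c i := by
  rw [digitSum_update]
  push_cast [hl]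
  ring

lemma digitSum_update_weight [DecidableEq ι] (c : ι → ℤ) (l : ι → Fin N) (i : ι) (a : ℤ) :
    digitSum (Function.update c i a) l = digitSum c l + (a - c i) * (l i : ℤ) := by
  rw [digitSum, sum_eq_sum_add_sub_of_eq_of_ne i fun j hj => by rw [Function.update_of_ne hj],
    Function.update_self, ← sub_mul, digitSum]

lemma digitSum_single [DecidableEq ι] [NeZero N] (c : ι → ℤ) (i : ι) (k : Fin N) :
    digitSum c (Pi.single i k) = c i * (k : ℤ) := by
  rw [Pi.single, digitSum_update]
  simp [digitSum]

lemma injective_of_injective_digitSum (hN : 1 < N) {c : ι → ℤ}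
    (h : Function.Injective (digitSum c : (ι → Fin N) → ℤ)) : Function.Injective c := by
  classical
  have : NeZero N := ⟨by omega⟩
  intro i j hij
  by_contra hne
  have hsingle : (Pi.single i ⟨1, hN⟩ : ι → Fin N) = Pi.single j ⟨1, hN⟩ :=
    h (by rw [digitSum_single, digitSum_single, hij])
  have hdigit := congrFun hsingle i
  rw [Pi.single_eq_same, Pi.single_eq_of_ne hne] at hdigit
  exact one_ne_zero (congrArg Fin.val hdigit)

end DigitSum

section IsDigitTiling

variable {ι α : Type*} [Fintype ι] {N : ℕ} {c : ι → ℤ} {f : α → ℤ}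

/-- The sum of the digit sets `{0, c j, …, (N - 1) c j}` is direct and tiles `ℤ`, with set of
translations the range of `f`. Translations are indexed by an arbitrary type so that digits and
translations can be regrouped. -/
def IsDigitTiling (N : ℕ) (c : ι → ℤ) (f : α → ℤ) : Prop :=
  Function.Bijective fun p : (ι → Fin N) × α => digitSum c p.1 + f p.2

lemma isDigitTiling_iff_existsUnique :
    IsDigitTiling N c f ↔ ∀ z, ∃! p : (ι → Fin N) × α, z = digitSum c p.1 + f p.2 := by
  simp only [IsDigitTiling, Function.bijective_iff_existsUnique, eq_comm]

namespace IsDigitTiling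

lemma injective_digitSum (h : IsDigitTiling N c f) :
    Function.Injective (digitSum c : (ι → Fin N) → ℤ) := by
  obtain ⟨⟨_, x⟩, -⟩ := h.2 0
  intro l l' hl
  exact congrArg Prod.fst (h.1 (a₁ := (l, x)) (a₂ := (l', x)) (congrArg (· + f x) hl))

lemma injective_translations [NeZero N] (h : IsDigitTiling N c f) : Function.Injective f :=
  fun x y hxy =>
    congrArg Prod.snd (h.1 (a₁ := (0, x)) (a₂ := (0, y)) (congrArg (digitSum c 0 + ·) hxy))

lemma range_translations [NeZero N] (h : IsDigitTiling N c f) :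
    IsDigitTiling N c ((↑) : Set.range f → ℤ) :=
  (Equiv.bijective_comp
    ((Equiv.refl (ι → Fin N)).prodCongr (Equiv.ofInjective f h.injective_translations)) _).1 h

lemma exists_comp_injective {κ : Type*} [Fintype κ] [NeZero N] (h : IsDigitTiling N c f)
    {e : κ → ι} (he : Function.Injective e) :
    ∃ L : Set ℤ, IsDigitTiling N (c ∘ e) ((↑) : L → ℤ) := by
  classical
  let complementWeight (i : {i // i ∉ Set.range e}) : ℤ := c i
  let g (q : ({i // i ∉ Set.range e} → Fin N) × α) : ℤ := digitSum complementWeight q.1 + f q.2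
  let split : κ ⊕ {i // i ∉ Set.range e} ≃ ι :=
    ((Equiv.ofInjective e he).sumCongr (Equiv.refl _)).trans (Equiv.Set.sumCompl _)
  let splitDigits : (ι → Fin N) × α ≃ (κ → Fin N) × ({i // i ∉ Set.range e} → Fin N) × α :=
    (((split.symm.arrowCongr (Equiv.refl _)).trans
      (Equiv.sumArrowEquivProdArrow _ _ _)).prodCongr (Equiv.refl α)).trans (Equiv.prodAssoc _ _ _)
  have digitSum_split (l : ι → Fin N) :
      digitSum c l = digitSum (c ∘ e) (l ∘ e) + digitSum complementWeight fun i => l i := by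
    rw [digitSum, ← split.sum_comp, Fintype.sum_sum_type]
    rfl
  refine ⟨Set.range g, IsDigitTiling.range_translations ((Equiv.bijective_comp splitDigits _).1 ?_)⟩
  have hsum : (fun p : (κ → Fin N) × _ => digitSum (c ∘ e) p.1 + g p.2) ∘ splitDigits =
      fun p => digitSum c p.1 + f p.2 := by
    funext p
    rw [digitSum_split, add_assoc]
    rfl
  exact hsum ▸ h

lemma exists_digit (h : IsDigitTiling N c f) (i : ι) :
    ∃ d : AddConstMap ℤ (ZMod N) (c i) 1,
      ∀ (l : ι → Fin N) x, d (digitSum c l + f x) = ((l i : ℕ) : ZMod N) := by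
  classical
  let expansion := Equiv.ofBijective _ h
  let d (z : ℤ) : ZMod N := (((expansion.symm z).1 i : ℕ) : ZMod N)
  have d_apply (l : ι → Fin N) (x : α) : d (digitSum c l + f x) = ((l i : ℕ) : ZMod N) :=
    congrArg (fun p => ((p.1 i : ℕ) : ZMod N)) (expansion.symm_apply_apply (l, x))
  refine ⟨⟨d, fun z => ?_⟩, d_apply⟩
  obtain ⟨⟨l, x⟩, hz⟩ := h.2 z
  obtain ⟨⟨l', x'⟩, hz'⟩ := h.2 (z + c i)
  dsimp only at hz hz'
  by_cases hl : (l i : ℕ) + 1 < N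
  · have hsucc : z + c i = digitSum c (Function.update l i ⟨l i + 1, hl⟩) + f x := by
      rw [digitSum_update_succ, ← hz, add_right_comm]
    rw [hsucc, ← hz, d_apply, d_apply, Function.update_self, Nat.cast_add_one]
  by_cases hl' : 1 ≤ (l' i : ℕ)
  · have hpred : z = digitSum c (Function.update l' i ⟨l' i - 1, by omega⟩) + f x' := by
      rw [digitSum_update_pred c hl']
      linear_combination -hz'
    rw [← hz', hpred, d_apply, d_apply, Function.update_self, ← Nat.cast_add_one,
      Nat.sub_add_cancel hl']
  · have hzero : (l' i : ℕ) = 0 := by omega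
    have hlast : (l i : ℕ) + 1 = N := by omega
    rw [← hz', ← hz, d_apply, d_apply, hzero, ← Nat.cast_add_one, hlast, Nat.cast_zero,
      ZMod.natCast_self]

lemma update_mul [DecidableEq ι] [NeZero N] (h : IsDigitTiling N c f) (i : ι) {r : ℤ}
    (hr : IsCoprime (N : ℤ) r) : IsDigitTiling N (Function.update c i (c i * r)) f := by
  obtain ⟨d, hd⟩ := h.exists_digit i
  have hunit : IsUnit (r : ZMod N) := (ZMod.coe_int_isUnit_iff_isCoprime r N).2 hr
  have hsum (l : ι → Fin N) (x : α) : digitSum (Function.update c i (c i * r)) l + f x =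
      digitSum c l + f x + ((r - 1) * (l i : ℤ)) • c i := by
    rw [digitSum_update_weight, smul_eq_mul]; ring
  constructor
  · rintro ⟨l, x⟩ ⟨l', x'⟩ hp
    simp only [hsum] at hp
    have hdigit : (r : ZMod N) * ((l i : ℕ) : ZMod N) = r * ((l' i : ℕ) : ZMod N) := by
      have hdp := congrArg d hp
      simp only [AddConstMapClass.map_add_zsmul, hd, zsmul_one] at hdp
      push_cast at hdp
      linear_combination hdp
    have hli : l i = l' i := injective_natCast_zmod_finVal N (hunit.mul_left_cancel hdigit)
    rw [hli] at hp
    exact h.1 (add_right_cancel hp)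
  · intro z
    obtain ⟨k, hk⟩ : ∃ k : Fin N, (r : ZMod N) * ((k : ℕ) : ZMod N) = d z := by
      obtain ⟨a, ha⟩ := hunit.dvd (a := d z)
      exact ⟨⟨a.val, a.val_lt⟩, by rw [ZMod.natCast_zmod_val, ha]⟩
    obtain ⟨⟨l, x⟩, hlx⟩ := h.2 (z - ((r - 1) * (k : ℤ)) • c i)
    dsimp only at hlx
    have hli : l i = k := by
      apply injective_natCast_zmod_finVal N
      have hdz := congrArg d hlx
      rw [hd, AddConstMapClass.map_sub_zsmul, zsmul_one, ← hk] at hdz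
      push_cast at hdz
      linear_combination hdz
    exact ⟨(l, x), (hsum l x).trans (by rw [hlx, hli, sub_add_cancel])⟩

lemma mul_of_isCoprime [NeZero N] (h : IsDigitTiling N c f) {r : ι → ℤ}
    (hr : ∀ j, IsCoprime (N : ℤ) (r j)) : IsDigitTiling N (c * r) f := by
  classical
  suffices ∀ s : Finset ι, IsDigitTiling N (s.piecewise (c * r) c) f by
    simpa only [Finset.piecewise_univ] using this Finset.univ
  intro s
  induction s using Finset.induction_on with
  | empty => simpa only [Finset.piecewise_empty] using h
  | insert j s hj ih =>
    have := ih.update_mul j (hr j)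
    rwa [Finset.piecewise_eq_of_notMem _ _ _ hj, ← Pi.mul_apply, ← Finset.piecewise_insert] at this

end IsDigitTiling

end IsDigitTiling

lemma isDigitTiling_pow (N M : ℕ) [NeZero N] :
    IsDigitTiling N (fun m : Fin M => (N : ℤ) ^ (m : ℕ)) fun q : ℤ => (N : ℤ) ^ M * q := by
  have : NeZero (N ^ M) := ⟨pow_ne_zero M (NeZero.ne N)⟩
  let positional : (Fin M → Fin N) × ℤ ≃ ℤ :=
    ((finFunctionFinEquiv.prodCongr (Equiv.refl ℤ)).trans (Equiv.prodComm _ _)).trans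
      (Int.divModEquiv (N ^ M)).symm
  have positional_apply (p : (Fin M → Fin N) × ℤ) :
      positional p = digitSum (fun m : Fin M => (N : ℤ) ^ (m : ℕ)) p.1 + (N : ℤ) ^ M * p.2 := by
    change p.2 * ((N ^ M : ℕ) : ℤ) + (finFunctionFinEquiv p.1 : ℕ) = _
    rw [finFunctionFinEquiv_apply, digitSum]
    push_cast
    simp only [mul_comm, add_comm]
  exact (congrArg Function.Bijective (funext positional_apply)).mp positional.bijective

lemma exists_eq_pow_padicValInt_mul {N : ℕ} [Fact N.Prime] {x : ℤ} (hx : x ≠ 0) :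
    ∃ u : ℤ, x = (N : ℤ) ^ padicValInt N x * u ∧ IsCoprime (N : ℤ) u := by
  have hN : Prime (N : ℤ) := Nat.prime_iff_prime_int.1 Fact.out
  obtain ⟨u, hu⟩ := padicValInt_dvd (p := N) x
  refine ⟨u, hu, hN.coprime_iff_not_dvd.2 fun hdvd => ?_⟩
  have hpow : (N : ℤ) ^ (padicValInt N x + 1) ∣ x := by
    conv_rhs => rw [hu]
    exact pow_succ (N : ℤ) _ ▸ mul_dvd_mul_left _ hdvd
  have := ((padicValInt_dvd_iff _ _).1 hpow).resolve_left hx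
  omega

theorem exists_isDigitTiling_iff_injective_padicValInt {ι : Type*} [Fintype ι] {N : ℕ}
    [Fact N.Prime] {c : ι → ℤ} (hc : ∀ j, c j ≠ 0) :
    (∃ L : Set ℤ, IsDigitTiling N c ((↑) : L → ℤ)) ↔
      Function.Injective fun j => padicValInt N (c j) := by
  classical
  choose u hcu hu using fun j => exists_eq_pow_padicValInt_mul (N := N) (hc j)
  constructor
  · rintro ⟨L, hL⟩ i j hij
    let r (k : ι) : ℤ := ∏ m ∈ Finset.univ.erase k, u m
    have hcr (k : ι) : (c * r) k = (N : ℤ) ^ padicValInt N (c k) * ∏ m, u m := by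
      rw [Pi.mul_apply, ← Finset.mul_prod_erase _ u (Finset.mem_univ k), ← mul_assoc, ← hcu]
    have hscaled := hL.mul_of_isCoprime (r := r) fun k => IsCoprime.prod_right fun m _ => hu m
    have hN : N.Prime := Fact.out
    exact injective_of_injective_digitSum hN.one_lt hscaled.injective_digitSum
      (by rw [hcr, hcr]; exact congrArg (fun v => (N : ℤ) ^ v * _) hij)
  · intro hinj
    let v (j : ι) : ℕ := padicValInt N (c j)
    let e (j : ι) : Fin (Finset.univ.sup v + 1) :=
      ⟨v j, Nat.lt_succ_of_le (Finset.le_sup (Finset.mem_univ j))⟩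
    have he : Function.Injective e := fun i j hij => hinj (congrArg Fin.val hij)
    obtain ⟨L, hL⟩ := (isDigitTiling_pow N _).exists_comp_injective he
    refine ⟨L, ?_⟩
    convert hL.mul_of_isCoprime hu using 1
    exact funext hcu

theorem injective_digitSum_and_tiles_iff {ι : Type*} [Fintype ι] {N : ℕ} [Fact N.Prime]
    {c : ι → ℤ} (hc : ∀ j, c j ≠ 0) :
    (Function.Injective (digitSum c : (ι → Fin N) → ℤ) ∧
      ∃ L : Set ℤ, ∀ z, ∃! p : (ι → Fin N) × L, z = digitSum c p.1 + p.2) ↔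
      Function.Injective fun j => padicValInt N (c j) := by
  simp only [← exists_isDigitTiling_iff_injective_padicValInt hc, ← isDigitTiling_iff_existsUnique]
  exact and_iff_right_of_imp fun ⟨_, hL⟩ => hL.injective_digitSum

section DigitWeight

variable {N : ℕ} [Fact N.Prime] {b t : ℕ → ℤ}

/-- The weight `b_k ⋯ b_{j+1} t_j` of the `j`-th digit set in `D_k + b_k D_{k-1} + ⋯`. -/
def digitWeight (b t : ℕ → ℤ) (k j : ℕ) : ℤ :=
  (∏ i ∈ Finset.Ico (j + 1) (k + 1), b i) * t j

lemma digitWeight_ne_zero (hb : ∀ k, b k ≠ 0) (ht : ∀ k, t k ≠ 0) (k j : ℕ) :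
    digitWeight b t k j ≠ 0 :=
  mul_ne_zero (Finset.prod_ne_zero_iff.2 fun i _ => hb i) (ht j)

lemma padicValInt_digitWeight (hb : ∀ k, b k ≠ 0) (ht : ∀ k, t k ≠ 0) {j k : ℕ} (hjk : j ≤ k) :
    (padicValInt N (digitWeight b t k j) : ℤ) = padicValInt N (∏ i ∈ Finset.range (k + 1), b i) -
      (padicValInt N (∏ i ∈ Finset.range (j + 1), b i) - padicValInt N ((N : ℤ) * t j)) - 1 := by
  have hN : N.Prime := Fact.out
  have hprod (s : Finset ℕ) : ∏ i ∈ s, b i ≠ 0 := Finset.prod_ne_zero_iff.2 fun i _ => hb i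
  rw [digitWeight, ← Finset.prod_range_mul_prod_Ico b (Nat.add_le_add_right hjk 1),
    padicValInt.mul (hprod _) (hprod _), padicValInt.mul (hprod _) (ht j),
    padicValInt.mul (Int.natCast_ne_zero.2 hN.ne_zero) (ht j), padicValInt.self hN.one_lt]
  push_cast
  ring

end DigitWeight

theorem stmt4_general (N : ℕ) (hN : N.Prime) (b t : ℕ → ℤ)
    (hb : ∀ k, b k ≠ 0) (ht : ∀ k, t k ≠ 0)
    (s : ℕ → ℤ)
    (hs : ∀ k, s k = (padicValInt N (∏ i ∈ Finset.range (k + 1), b i) : ℤ)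
        - (padicValInt N ((N : ℤ) * t k) : ℤ)) :
    (∀ k : ℕ,
        Function.Injective (fun l : Fin (k + 1) → Fin N =>
          ∑ j : Fin (k + 1),
            (∏ i ∈ Finset.Ico ((j : ℕ) + 1) (k + 1), b i) * t (j : ℕ) *
              ((l j : ℕ) : ℤ)) ∧
        ∃ L : Set ℤ, ∀ z : ℤ,
          ∃! p : (Fin (k + 1) → Fin N) × L,
            z = (∑ j : Fin (k + 1),
                  (∏ i ∈ Finset.Ico ((j : ℕ) + 1) (k + 1), b i) * t (j : ℕ) *
                    ((p.1 j : ℕ) : ℤ)) + (p.2 : ℤ)) ↔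
      ∀ i j : ℕ, i ≠ j → s i ≠ s j := by
  have : Fact N.Prime := ⟨hN⟩
  have weight_tiles_iff (k : ℕ) := injective_digitSum_and_tiles_iff (ι := Fin (k + 1)) (N := N)
    fun j => digitWeight_ne_zero hb ht k j
  have padicValInt_digitWeight_eq_iff {i j k : ℕ} (hi : i ≤ k) (hj : j ≤ k) :
      padicValInt N (digitWeight b t k i) = padicValInt N (digitWeight b t k j) ↔ s i = s j := by
    rw [← Nat.cast_inj (R := ℤ), padicValInt_digitWeight hb ht hi, padicValInt_digitWeight hb ht hj,
      ← hs, ← hs, sub_left_inj, sub_right_inj]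
  refine (forall_congr' weight_tiles_iff).trans
    ⟨fun h i j hij hsij => hij ?_, fun h k i j hij => ?_⟩
  · have hi : i ≤ max i j := le_max_left i j
    have hj : j ≤ max i j := le_max_right i j
    exact congrArg Fin.val (h (max i j) (a₁ := ⟨i, Nat.lt_succ_of_le hi⟩)
      (a₂ := ⟨j, Nat.lt_succ_of_le hj⟩) ((padicValInt_digitWeight_eq_iff hi hj).2 hsij))
  · have hsij : s i = s j := (padicValInt_digitWeight_eq_iff (by omega) (by omega)).1 hij
    exact Fin.ext (not_imp_not.1 (h i j) hsij)

/-- Theorem 1.3: let `N` be a prime, `b k` integers with `|b k| ≥ 2`, `t k` nonzero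
integers, `D k = {0,…,N-1} t k`, and
`s k = τ_N(b 0 ⋯ b k) − τ_N(N * t k)` (indices written from `0`).  Then for every
`k` the set `𝐃_k = D_k + b_k D_{k-1} + ⋯ + (b_k ⋯ b_1) D_0` is a direct sum
(the representation map is injective) and an integer tile (there is `L ⊆ ℤ` with
`𝐃_k ⊕ L = ℤ`) if and only if `s i ≠ s j` for all `i ≠ j`. -/
theorem stmt4 (N : ℕ) (hN : N.Prime) (b t : ℕ → ℤ)
    (hb : ∀ k, 2 ≤ |b k|) (ht : ∀ k, t k ≠ 0)
    (s : ℕ → ℤ)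
    (hs : ∀ k, s k = (padicValInt N (∏ i ∈ Finset.range (k + 1), b i) : ℤ)
        - (padicValInt N ((N : ℤ) * t k) : ℤ)) :
    (∀ k : ℕ,
        Function.Injective (fun l : Fin (k + 1) → Fin N =>
          ∑ j : Fin (k + 1),
            (∏ i ∈ Finset.Ico ((j : ℕ) + 1) (k + 1), b i) * t (j : ℕ) *
              ((l j : ℕ) : ℤ)) ∧
        ∃ L : Set ℤ, ∀ z : ℤ,
          ∃! p : (Fin (k + 1) → Fin N) × L,
            z = (∑ j : Fin (k + 1),
                  (∏ i ∈ Finset.Ico ((j : ℕ) + 1) (k + 1), b i) * t (j : ℕ) *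
                    ((p.1 j : ℕ) : ℤ)) + (p.2 : ℤ)) ↔
      ∀ i j : ℕ, i ≠ j → s i ≠ s j := by
  exact stmt4_general N hN b t (fun k hk => by simpa [hk] using hb k) ht s hs
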